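/- arXiv:0707.2527 — 3 statements merged into one kernel-verified Lean document; each statement's English description precedes it below -/
import Mathlib

section
/- Let N ≥ 1 and let w, c : {1,...,N} → ℝ satisfy w_n > 0 and c_n > 0 for all n. Let λ > 0 and define κ_n = w_n/(λ c_n) − 1. Assume κ_n ≥ 0 for all n and Σ_{n=1}^N κ_n c_n = 1. Then for every κ' : {1,...,N} → ℝ with κ'_n ≥ 0 for all n and Σ_{n=1}^N κ'_n c_n = 1, one has Σ_{n=1}^N w_n · log(1+κ'_n) ≤ Σ_{n=1}^N w_n · log(1+κ_n). That is, the waterfilling point κ maximizes the weighted sum rate over the feasible set. -/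
/-!
At the price `lam` per unit of power, the Lagrangian `w n * log (1 + x) - lam * (x * c n)` of each
channel is strictly concave in `x > -1`, so its stationary point `x = w n / (lam * c n) - 1` is a
global maximizer. Hence an allocation with a larger total rate than the waterfilling point would
have to spend more power than it does.
-/

section Lagrangian

variable {ι R : Type*} [Ring R] [PartialOrder R] [IsOrderedRing R]

theorem sum_le_sum_of_forall_sub_mul_le_sub_mul {s : Finset ι} {rate rate' cost cost' : ι → R}
    {price : R} (hprice : 0 ≤ price)
    (hlagrangian : ∀ i ∈ s, rate' i - price * cost' i ≤ rate i - price * cost i)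
    (hcost : ∑ i ∈ s, cost' i ≤ ∑ i ∈ s, cost i) :
    ∑ i ∈ s, rate' i ≤ ∑ i ∈ s, rate i := by
  have hsum : ∑ i ∈ s, rate' i - price * ∑ i ∈ s, cost' i ≤
      ∑ i ∈ s, rate i - price * ∑ i ∈ s, cost i := by
    simpa only [Finset.sum_sub_distrib, Finset.mul_sum] using Finset.sum_le_sum hlagrangian
  simpa only [sub_add_cancel] using add_le_add hsum (mul_le_mul_of_nonneg_left hcost hprice)

end Lagrangian

theorem isMaxOn_mul_log_sub_mul {w p : ℝ} (hw : 0 < w) (hp : 0 < p) :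
    IsMaxOn (fun x ↦ w * Real.log x - p * x) (Set.Ioi 0) (w / p) := by
  refine isMaxOn_iff.mpr fun x (hx : 0 < x) ↦ ?_
  have hopt : 0 < w / p := div_pos hw hp
  have htangent : Real.log x - Real.log (w / p) ≤ x / (w / p) - 1 := by
    rw [← Real.log_div hx.ne' hopt.ne']
    exact Real.log_le_sub_one_of_pos (div_pos hx hopt)
  have hscaled : w * (Real.log x - Real.log (w / p)) ≤ p * x - p * (w / p) :=
    calc
      w * (Real.log x - Real.log (w / p)) ≤ w * (x / (w / p) - 1) := by gcongr
      _ = p * x - p * (w / p) := by field_simp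
  linarith

theorem waterfilling_maximizes_weighted_sum_rate_general {ι : Type*} {s : Finset ι}
    {w c κ κ' : ι → ℝ} {lam : ℝ} (hw : ∀ n ∈ s, 0 < w n) (hc : ∀ n ∈ s, 0 < c n)
    (hlam : 0 < lam) (hκdef : ∀ n ∈ s, κ n = w n / (lam * c n) - 1)
    (hκ' : ∀ n ∈ s, -1 < κ' n) (hpower : ∑ n ∈ s, κ' n * c n ≤ ∑ n ∈ s, κ n * c n) :
    ∑ n ∈ s, w n * Real.log (1 + κ' n) ≤ ∑ n ∈ s, w n * Real.log (1 + κ n) := by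
  refine sum_le_sum_of_forall_sub_mul_le_sub_mul hlam.le (fun n hn ↦ ?_) hpower
  have hstationary : w n / (lam * c n) = 1 + κ n := by linarith [hκdef n hn]
  have hmax : w n * Real.log (1 + κ' n) - lam * c n * (1 + κ' n) ≤
      w n * Real.log (1 + κ n) - lam * c n * (1 + κ n) := by
    rw [← hstationary]
    exact isMaxOn_iff.mp (isMaxOn_mul_log_sub_mul (hw n hn) (mul_pos hlam (hc n hn)))
      (1 + κ' n) (neg_lt_iff_pos_add'.mp (hκ' n hn))
  linarith

/-- The waterfilling point `κ n = w n / (λ c n) − 1` maximizes the weighted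
sum rate `Σ w n log(1 + κ n)` over all nonnegative `κ'` satisfying the average power
constraint `Σ κ' n * c n = 1`. -/
theorem waterfilling_maximizes_weighted_sum_rate
    (N : ℕ) (hN : 1 ≤ N) (w c : Fin N → ℝ)
    (hw : ∀ n, 0 < w n) (hc : ∀ n, 0 < c n)
    (lam : ℝ) (hlam : 0 < lam)
    (κ : Fin N → ℝ) (hκdef : ∀ n, κ n = w n / (lam * c n) - 1)
    (hκnn : ∀ n, 0 ≤ κ n) (hκsum : ∑ n, κ n * c n = 1)
    (κ' : Fin N → ℝ) (hκ'nn : ∀ n, 0 ≤ κ' n) (hκ'sum : ∑ n, κ' n * c n = 1) :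
    ∑ n, w n * Real.log (1 + κ' n) ≤ ∑ n, w n * Real.log (1 + κ n) :=
  waterfilling_maximizes_weighted_sum_rate_general (fun n _ ↦ hw n) (fun n _ ↦ hc n) hlam
    (fun n _ ↦ hκdef n) (fun n _ ↦ neg_one_lt_zero.trans_le (hκ'nn n)) (hκ'sum.trans hκsum.symm).le
end

section
/- Let N ≥ 1 and let w, c : {1,...,N} → ℝ satisfy w_n > 0 and c_n > 0 for all n. Let λ > 0, define κ_n = w_n/(λ c_n) − 1, and assume κ_n ≥ 0 for all n and Σ_{n=1}^N κ_n c_n = 1. If κ' : {1,...,N} → ℝ satisfies κ'_n ≥ 0 for all n, Σ_{n=1}^N κ'_n c_n = 1, and Σ_{n=1}^N w_n · log(1+κ'_n) = Σ_{n=1}^N w_n · log(1+κ_n), then κ'_n = κ_n for all n; i.e., the waterfilling maximizer is the unique maximizer. -/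
/-!
Away from `1 + κ n`, the graph of the logarithm lies strictly below its tangent line there, whose
slope, weighted by `w n`, is `w n / (1 + κ n) = lam * c n`. Summing over `n`, the rate gained by
passing from `κ` to another `κ'` is strictly less than `lam` times the additional power spent, and
the power constraint leaves none to spend.
-/

open Finset

theorem log_lt_log_add_sub_div {x y : ℝ} (hx : 0 < x) (hy : 0 < y) (hne : y ≠ x) :
    Real.log y < Real.log x + (y - x) / x := by
  have hratio : Real.log (y / x) < y / x - 1 :=
    Real.log_lt_sub_one_of_pos (div_pos hy hx) (mt (div_eq_one_iff_eq hx.ne').1 hne)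
  rw [Real.log_div hy.ne' hx.ne'] at hratio
  rw [sub_div, div_self hx.ne']
  linarith

section WeightedLogSum

variable {ι : Type*} {s : Finset ι} {w p q : ι → ℝ}

theorem sum_mul_log_lt_add_sum_mul_sub_div (hw : ∀ i ∈ s, 0 < w i) (hp : ∀ i ∈ s, 0 < p i)
    (hq : ∀ i ∈ s, 0 < q i) (hne : ∃ i ∈ s, q i ≠ p i) :
    ∑ i ∈ s, w i * Real.log (q i) <
      ∑ i ∈ s, w i * Real.log (p i) + ∑ i ∈ s, w i * ((q i - p i) / p i) := by
  have hterm : ∀ i ∈ s, q i ≠ p i →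
      w i * Real.log (q i) < w i * Real.log (p i) + w i * ((q i - p i) / p i) := by
    intro i hi hqp
    rw [← mul_add]
    exact mul_lt_mul_of_pos_left (log_lt_log_add_sub_div (hp i hi) (hq i hi) hqp) (hw i hi)
  rw [← sum_add_distrib]
  refine sum_lt_sum (fun i hi => ?_) (hne.imp fun i ⟨hi, hqp⟩ => ⟨hi, hterm i hi hqp⟩)
  rcases eq_or_ne (q i) (p i) with hqp | hqp
  · simp [hqp]
  · exact (hterm i hi hqp).le

/- The hypothesis `hstat` is stationarity in `p` of the Lagrangian
`∑ i ∈ s, w i * Real.log (p i) - lam * ∑ i ∈ s, p i * c i`. -/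
theorem sum_mul_log_lt_of_stationary {c : ι → ℝ} {lam : ℝ} (hlam : 0 ≤ lam)
    (hw : ∀ i ∈ s, 0 < w i) (hp : ∀ i ∈ s, 0 < p i) (hq : ∀ i ∈ s, 0 < q i)
    (hstat : ∀ i ∈ s, w i / p i = lam * c i)
    (hbudget : ∑ i ∈ s, q i * c i ≤ ∑ i ∈ s, p i * c i) (hne : ∃ i ∈ s, q i ≠ p i) :
    ∑ i ∈ s, w i * Real.log (q i) < ∑ i ∈ s, w i * Real.log (p i) := by
  have hgain : ∑ i ∈ s, w i * ((q i - p i) / p i) =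
      lam * (∑ i ∈ s, q i * c i - ∑ i ∈ s, p i * c i) := by
    rw [← sum_sub_distrib, mul_sum]
    refine sum_congr rfl fun i hi => ?_
    calc w i * ((q i - p i) / p i) = w i / p i * (q i - p i) := by ring
      _ = lam * (q i * c i - p i * c i) := by rw [hstat i hi]; ring
  calc ∑ i ∈ s, w i * Real.log (q i)
      < ∑ i ∈ s, w i * Real.log (p i) + ∑ i ∈ s, w i * ((q i - p i) / p i) :=
        sum_mul_log_lt_add_sum_mul_sub_div hw hp hq hne
    _ ≤ ∑ i ∈ s, w i * Real.log (p i) := by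
        rw [hgain]
        exact add_le_of_nonpos_right
          (mul_nonpos_of_nonneg_of_nonpos hlam (sub_nonpos.2 hbudget))

end WeightedLogSum

theorem waterfilling_unique_maximizer_general {ι : Type*} [Fintype ι] {w c κ κ' : ι → ℝ} {lam : ℝ}
    (hw : ∀ n, 0 < w n) (hc : ∀ n, 0 < c n) (hlam : 0 < lam)
    (hκdef : ∀ n, κ n = w n / (lam * c n) - 1) (hκ' : ∀ n, -1 < κ' n)
    (hbudget : ∑ n, κ' n * c n ≤ ∑ n, κ n * c n)
    (hrate : ∑ n, w n * Real.log (1 + κ n) ≤ ∑ n, w n * Real.log (1 + κ' n)) :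
    κ' = κ := by
  have hlevel (n : ι) : 1 + κ n = w n / (lam * c n) := by rw [hκdef n]; ring
  have hpos (n : ι) : 0 < 1 + κ n := hlevel n ▸ div_pos (hw n) (mul_pos hlam (hc n))
  have hpos' (n : ι) : 0 < 1 + κ' n := by linarith [hκ' n]
  have hstat (n : ι) : w n / (1 + κ n) = lam * c n := by
    rw [hlevel n, div_div_cancel₀ (hw n).ne']
  by_contra hne
  obtain ⟨m, hm⟩ := Function.ne_iff.1 hne
  refine hrate.not_gt (sum_mul_log_lt_of_stationary hlam.le (fun n _ => hw n) (fun n _ => hpos n)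
    (fun n _ => hpos' n) (fun n _ => hstat n) ?_ ⟨m, mem_univ m, (add_right_injective 1).ne hm⟩)
  simpa only [add_mul, sum_add_distrib, add_le_add_iff_left] using hbudget

/-- The waterfilling point `κ n = w n / (λ c n) − 1` is the *unique* maximizer
of the weighted sum rate `Σ w n log(1 + κ n)` over all nonnegative `κ'` satisfying the
average power constraint `Σ κ' n * c n = 1`. -/
theorem waterfilling_unique_maximizer
    (N : ℕ) (hN : 1 ≤ N) (w c : Fin N → ℝ)
    (hw : ∀ n, 0 < w n) (hc : ∀ n, 0 < c n)
    (lam : ℝ) (hlam : 0 < lam)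
    (κ : Fin N → ℝ) (hκdef : ∀ n, κ n = w n / (lam * c n) - 1)
    (hκnn : ∀ n, 0 ≤ κ n) (hκsum : ∑ n, κ n * c n = 1)
    (κ' : Fin N → ℝ) (hκ'nn : ∀ n, 0 ≤ κ' n) (hκ'sum : ∑ n, κ' n * c n = 1)
    (heq : ∑ n, w n * Real.log (1 + κ' n) = ∑ n, w n * Real.log (1 + κ n)) :
    ∀ n, κ' n = κ n :=
  congrFun <| waterfilling_unique_maximizer_general hw hc hlam hκdef
    (fun n => neg_one_lt_zero.trans_le (hκ'nn n)) (hκ'sum.trans hκsum.symm).le heq.ge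
end

section
/- Let γ̄ > 0 and let f(γ) = (1/γ̄)·exp(−γ/γ̄) be the exponential density. Then there exists a unique x > 0 such that ∫_x^∞ (1/x − 1/γ)·f(γ) dγ = 1; i.e., the cutoff value γ_cut of the optimal continuous-rate continuous-power (waterfilling) adaptation for the Rayleigh fading channel exists and is unique. -/
/-!
Multiplying the power equation `∫_x^∞ (1/x − 1/γ) dμ(γ) = P` by `x` turns its left-hand side into
`F(x) = ∫_x^∞ (1 − x/γ) dμ(γ) = ∫_0^∞ max(1 − x/γ, 0) dμ(γ)`. The last integrand lies in `[0, 1]`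
and is continuous and decreasing in `x`, so for a finite measure `μ` the function `F` is continuous
and decreasing on `[0, ∞)`, with `F(0) = μ(0, ∞)`. If `F(0) > 0`, the graph of `F` meets the
increasing line `x ↦ P x` in exactly one point.
-/

open MeasureTheory ProbabilityTheory Set

theorem existsUnique_pos_eq_mul_of_antitoneOn {F : ℝ → ℝ} (hanti : AntitoneOn F (Ici 0))
    (hcont : ContinuousOn F (Ici 0)) (hF : 0 < F 0) {P : ℝ} (hP : 0 < P) :
    ∃! x : ℝ, 0 < x ∧ F x = P * x := by
  have hdiff : StrictAntiOn (fun x => F x - P * x) (Ici 0) := fun x hx y hy hxy =>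
    by linarith [hanti hx hy hxy.le, mul_lt_mul_of_pos_left hxy hP]
  have hb : 0 ≤ F 0 / P := by positivity
  have hF_le : F (F 0 / P) - P * (F 0 / P) ≤ 0 := by
    rw [mul_div_cancel₀ _ hP.ne', sub_nonpos]
    exact hanti self_mem_Ici hb hb
  obtain ⟨x, ⟨hx, -⟩, hxF⟩ : (0 : ℝ) ∈ (fun x => F x - P * x) '' Icc 0 (F 0 / P) :=
    intermediate_value_Icc' hb
      ((hcont.mono Icc_subset_Ici_self).sub (by fun_prop)) ⟨hF_le, by simpa using hF.le⟩
  have hx0 : x ≠ 0 := by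
    rintro rfl
    simp [hF.ne'] at hxF
  refine ⟨x, ⟨hx.lt_of_ne' hx0, sub_eq_zero.1 hxF⟩, fun y ⟨hy, hyF⟩ => ?_⟩
  exact hdiff.injOn hy.le hx ((sub_eq_zero.2 hyF).trans hxF.symm)

/-- The average power spent by waterfilling with cutoff `x` on a channel with SNR distribution `μ`,
measured in units of the water level `1 / x`. The positive part makes the domain of integration
independent of `x`. -/
noncomputable def scaledWaterfillingPower (μ : Measure ℝ) (x : ℝ) : ℝ :=
  ∫ g in Ioi 0, max (1 - x / g) 0 ∂μ

namespace scaledWaterfillingPower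

theorem setIntegral_Ioi_eq_div (μ : Measure ℝ) {x : ℝ} (hx : 0 < x) :
    ∫ g in Ioi x, (1 / x - 1 / g) ∂μ = scaledWaterfillingPower μ x / x := by
  have hbelow : ∀ g ∈ Ioi (0 : ℝ) \ Ioi x, max (1 - x / g) 0 = 0 := fun g ⟨hg, hgx⟩ =>
    max_eq_right (sub_nonpos.2 ((one_le_div hg).2 (not_lt.1 hgx)))
  rw [scaledWaterfillingPower, setIntegral_eq_of_subset_of_forall_sdiff_eq_zero measurableSet_Ioi
    (Ioi_subset_Ioi hx.le) hbelow, ← integral_div]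
  refine setIntegral_congr_fun measurableSet_Ioi fun g (hg : x < g) => ?_
  have hg0 : 0 < g := hx.trans hg
  have habove : 0 ≤ 1 - x / g := sub_nonneg.2 ((div_le_one hg0).2 hg.le)
  simp only [max_eq_left habove]
  field_simp

theorem zero_right (μ : Measure ℝ) : scaledWaterfillingPower μ 0 = μ.real (Ioi 0) := by
  simp [scaledWaterfillingPower]

theorem norm_integrand_le_one {x g : ℝ} (hx : 0 ≤ x) (hg : 0 ≤ g) : ‖max (1 - x / g) 0‖ ≤ 1 := by
  rw [Real.norm_of_nonneg (le_max_right _ _)]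
  exact max_le (sub_le_self _ (div_nonneg hx hg)) zero_le_one

theorem ae_norm_integrand_le_one (μ : Measure ℝ) {x : ℝ} (hx : 0 ≤ x) :
    ∀ᵐ g ∂μ.restrict (Ioi 0), ‖max (1 - x / g) 0‖ ≤ 1 :=
  ae_restrict_of_forall_mem measurableSet_Ioi fun _ hg => norm_integrand_le_one hx (le_of_lt hg)

theorem aestronglyMeasurable_integrand (μ : Measure ℝ) (x : ℝ) :
    AEStronglyMeasurable (fun g : ℝ => max (1 - x / g) 0) μ :=
  (by fun_prop : Measurable fun g : ℝ => max (1 - x / g) 0).aestronglyMeasurable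

variable (μ : Measure ℝ) [IsFiniteMeasure μ]

theorem integrableOn_integrand {x : ℝ} (hx : 0 ≤ x) :
    IntegrableOn (fun g => max (1 - x / g) 0) (Ioi 0) μ :=
  Integrable.of_bound (aestronglyMeasurable_integrand _ x) 1 (ae_norm_integrand_le_one μ hx)

theorem antitoneOn : AntitoneOn (scaledWaterfillingPower μ) (Ici 0) := by
  intro x hx y hy hxy
  refine setIntegral_mono_on (integrableOn_integrand μ hy) (integrableOn_integrand μ hx)
    measurableSet_Ioi fun g (hg : 0 < g) => ?_
  gcongr

theorem continuousOn : ContinuousOn (scaledWaterfillingPower μ) (Ici 0) :=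
  continuousOn_of_dominated (fun x _ => aestronglyMeasurable_integrand _ x)
    (fun _ hx => ae_norm_integrand_le_one μ hx) (integrable_const 1)
    (ae_of_all _ fun g => by fun_prop)

end scaledWaterfillingPower

theorem rayleigh_waterfilling_cutoff_exists_unique_general (μ : Measure ℝ) [IsFiniteMeasure μ]
    (hμ : μ (Ioi 0) ≠ 0) {P : ℝ} (hP : 0 < P) :
    ∃! x : ℝ, 0 < x ∧ ∫ g in Ioi x, (1 / x - 1 / g) ∂μ = P := by
  have hzero : 0 < scaledWaterfillingPower μ 0 := by
    rw [scaledWaterfillingPower.zero_right]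
    exact ENNReal.toReal_pos hμ (measure_ne_top μ _)
  refine (existsUnique_congr fun x => and_congr_right fun hx => ?_).2
    (existsUnique_pos_eq_mul_of_antitoneOn (scaledWaterfillingPower.antitoneOn μ)
      (scaledWaterfillingPower.continuousOn μ) hzero hP)
  rw [scaledWaterfillingPower.setIntegral_Ioi_eq_div μ hx, div_eq_iff hx.ne']

theorem setIntegral_Ioi_expMeasure {r : ℝ} (hr : 0 < r) {x : ℝ} (hx : 0 ≤ x) (h : ℝ → ℝ) :
    ∫ g in Ioi x, h g ∂expMeasure r = ∫ g in Ioi x, h g * (r * Real.exp (-(r * g))) := by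
  have hdensity : expMeasure r = volume.withDensity (exponentialPDF r) := rfl
  have hmeas : Measurable (exponentialPDF r) :=
    (measurable_exponentialPDFReal r).ennreal_ofReal
  rw [hdensity, setIntegral_withDensity_eq_setIntegral_toReal_smul hmeas
    (ae_of_all _ fun _ => ENNReal.ofReal_lt_top) h measurableSet_Ioi]
  refine setIntegral_congr_fun measurableSet_Ioi fun g (hg : x < g) => ?_
  have hpdf : (exponentialPDF r g).toReal = r * Real.exp (-(r * g)) := by
    rw [exponentialPDF_of_nonneg (hx.trans hg.le), ENNReal.toReal_ofReal (by positivity)]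
  simp only [hpdf, smul_eq_mul, mul_comm]

theorem expMeasure_Ioi_zero {r : ℝ} (hr : 0 < r) : expMeasure r (Ioi 0) = 1 := by
  have := isProbabilityMeasure_expMeasure hr
  have hcdf : cdf (expMeasure r) 0 = 0 := by simp [cdf_expMeasure_eq hr]
  have hIic : expMeasure r (Iic 0) = 0 := by
    rwa [cdf_eq_real, measureReal_eq_zero_iff] at hcdf
  rwa [← compl_Iic, prob_compl_eq_one_iff measurableSet_Iic]

/-- For the Rayleigh fading channel with exponential SNR density
`f(γ) = (1/γ̄)e^{−γ/γ̄}`, the waterfilling cutoff exists and is unique: there is a unique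
`x > 0` with `∫_x^∞ (1/x − 1/γ) f(γ) dγ = 1`. -/
theorem rayleigh_waterfilling_cutoff_exists_unique
    (γbar : ℝ) (hγbar : 0 < γbar) :
    ∃! x : ℝ, 0 < x ∧
      ∫ g in Set.Ioi x, (1 / x - 1 / g) * ((1 / γbar) * Real.exp (-g / γbar)) = 1 := by
  have hrate : 0 < 1 / γbar := one_div_pos.2 hγbar
  have := isProbabilityMeasure_expMeasure hrate
  have hmass : expMeasure (1 / γbar) (Ioi 0) ≠ 0 := expMeasure_Ioi_zero hrate ▸ one_ne_zero
  refine (existsUnique_congr fun x => and_congr_right fun hx => ?_).2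
    (rayleigh_waterfilling_cutoff_exists_unique_general (expMeasure (1 / γbar)) hmass one_pos)
  simp only [setIntegral_Ioi_expMeasure hrate hx.le, neg_div, one_div_mul_eq_div]
end
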